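/- Let Φ = {φ_i}_{i∈Λ} be a diagonal affine IFS on ℝ^d whose linear parts lie in a 1-dimensional subgroup, with Lyapunov exponents χ₁ < … < χ_d for a probability vector p, and let μ be the associated self-affine measure. Let J ⊂ {1,…,d} satisfy dim π_J μ = |J|. Then for every ε > 0 there exists M(ε) such that for all m ≥ M(ε) and all n ≥ 1, (1/m)·H(μ, π_J^{−1}𝓔_{n+m} | 𝓔_n) ≥ Σ_{j∈J} χ_j − ε. -/

import Mathlib

open MeasureTheory Finset

/-- The cell of the level-`n` non-conformal partition `𝓔_n` of `ℝ^d`. -/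
noncomputable def Ecell (d : ℕ) (χ : Fin d → ℝ) (n : ℕ) (k : Fin d → ℤ) :
    Set (Fin d → ℝ) :=
  {x | ∀ j, (k j : ℝ) / 2 ^ ⌊χ j * n⌋ ≤ x j ∧ x j < ((k j : ℝ) + 1) / 2 ^ ⌊χ j * n⌋}

/-- The cell of the partition `π_J^{-1}𝓔_n` of `ℝ^d` indexed by `k : J → ℤ`. -/
noncomputable def EcellJ (d : ℕ) (χ : Fin d → ℝ) (J : Finset (Fin d)) (n : ℕ)
    (k : J → ℤ) : Set (Fin d → ℝ) :=
  {x | ∀ j : J, (k j : ℝ) / 2 ^ ⌊χ j * n⌋ ≤ x j ∧ x j < ((k j : ℝ) + 1) / 2 ^ ⌊χ j * n⌋}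

/-- Entropy (base 2) of a measure on `ℝ^d` with respect to `𝓔_n`. -/
noncomputable def entE (d : ℕ) (χ : Fin d → ℝ) (n : ℕ) (θ : Measure (Fin d → ℝ)) : ℝ :=
  ∑' k : Fin d → ℤ,
    -((θ (Ecell d χ n k)).toReal * Real.logb 2 (θ (Ecell d χ n k)).toReal)

/-- Entropy (base 2) of a measure with respect to the join `π_J^{-1}𝓔_{n'} ∨ 𝓔_n`. -/
noncomputable def entJoin (d : ℕ) (χ : Fin d → ℝ) (J : Finset (Fin d)) (n' n : ℕ)
    (θ : Measure (Fin d → ℝ)) : ℝ :=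
  ∑' q : (J → ℤ) × (Fin d → ℤ),
    -((θ (EcellJ d χ J n' q.1 ∩ Ecell d χ n q.2)).toReal *
      Real.logb 2 (θ (EcellJ d χ J n' q.1 ∩ Ecell d χ n q.2)).toReal)


lemma pw_ent (a b g w L : ℝ) (hg : 0 ≤ g) (hga : g ≤ a) (hab : a ≤ b) (hw : 0 ≤ w) (hL : 0 ≤ L)
    (hgw : 2 * g ≤ (2:ℝ) ^ (-L) * w) :
    (2 * g - a) * L - 2 * w * (a / b) ≤ a * (Real.logb 2 b - Real.logb 2 a) := by
  rcases (hg.trans hga).eq_or_lt with h0 | ha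
  · have : g = 0 := by linarith
    subst h0; simp [this]
  have hb : 0 < b := ha.trans_le hab
  have hl2 : (1/2:ℝ) < Real.log 2 := by have := Real.log_two_gt_d9; linarith
  by_cases h : a ≤ 2 * g
  · have hg0 : 0 < g := by linarith
    have hw0 : 0 < w := by
      rcases hw.eq_or_lt with h | h
      · rw [← h] at hgw; linarith
      · exact h
    have h1 : Real.logb 2 a ≤ -L + Real.logb 2 w := by
      have : Real.logb 2 a ≤ Real.logb 2 ((2:ℝ) ^ (-L) * w) :=
        Real.logb_le_logb_of_le (by norm_num) ha (h.trans hgw)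
      rwa [Real.logb_mul (by positivity) hw0.ne', Real.logb_rpow (by norm_num) (by norm_num)] at this
    have h2 : Real.logb 2 w - Real.logb 2 b ≤ 2 * (w / b) := by
      rw [← Real.logb_div hw0.ne' hb.ne', Real.logb, div_le_iff₀ (by linarith)]
      have h3 : Real.log (w / b) ≤ w / b := (Real.log_le_sub_one_of_pos (by positivity)).trans (by linarith)
      have : 0 < w / b := by positivity
      nlinarith
    have h3 : a * (L - 2 * (w / b)) ≤ a * (Real.logb 2 b - Real.logb 2 a) :=
      mul_le_mul_of_nonneg_left (by linarith) ha.le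
    have h4 : (2 * g - a) * L ≤ a * L := mul_le_mul_of_nonneg_right (by linarith) hL
    have h5 : 2 * w * (a / b) = a * (2 * (w / b)) := by ring
    rw [h5]; linarith
  · have h1 : Real.logb 2 a ≤ Real.logb 2 b := Real.logb_le_logb_of_le (by norm_num) ha hab
    have h2 : 0 ≤ a * (Real.logb 2 b - Real.logb 2 a) := mul_nonneg ha.le (by linarith)
    have h3 : (2 * g - a) * L ≤ 0 := mul_nonpos_of_nonpos_of_nonneg (by linarith) hL
    have : 0 ≤ 2 * w * (a / b) := by positivity
    linarith

lemma sum_ent {α β : Type*} (F : Finset α) (F' : Finset β) (a g : α → β → ℝ) (b w : β → ℝ) (L : ℝ)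
    (hg : ∀ q k, 0 ≤ g q k) (hga : ∀ q k, g q k ≤ a q k) (hw : ∀ k, 0 ≤ w k) (hL : 0 ≤ L)
    (hb : ∀ k, b k = ∑ q ∈ F, a q k)
    (hgw : ∀ q k, 2 * g q k ≤ (2:ℝ) ^ (-L) * w k) :
    (2 * (∑ k ∈ F', ∑ q ∈ F, g q k) - ∑ k ∈ F', ∑ q ∈ F, a q k) * L - 2 * ∑ k ∈ F', w k ≤
      ∑ k ∈ F', ∑ q ∈ F, a q k * (Real.logb 2 (b k) - Real.logb 2 (a q k)) := by
  rw [Finset.mul_sum, ← Finset.sum_sub_distrib, Finset.sum_mul, Finset.mul_sum, ← Finset.sum_sub_distrib]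
  refine Finset.sum_le_sum fun k _ => ?_
  have ha : ∀ q, 0 ≤ a q k := fun q => (hg q k).trans (hga q k)
  have h1 : ∑ q ∈ F, ((2 * g q k - a q k) * L - 2 * w k * (a q k / b k)) ≤
      ∑ q ∈ F, a q k * (Real.logb 2 (b k) - Real.logb 2 (a q k)) := by
    refine Finset.sum_le_sum fun q hq => pw_ent _ _ _ _ _ (hg q k) (hga q k) ?_ (hw k) hL (hgw q k)
    rw [hb]; exact Finset.single_le_sum (f := fun q => a q k) (fun q _ => ha q) hq
  refine le_trans ?_ h1
  rw [Finset.sum_sub_distrib, ← Finset.sum_mul, Finset.sum_sub_distrib, ← Finset.mul_sum,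
    ← Finset.mul_sum, ← Finset.sum_div, ← hb]
  have : b k / b k ≤ 1 := div_self_le_one _
  nlinarith [hw k]

lemma supp_bound {Λ : Type*} [Fintype Λ] [Nonempty Λ] (d : ℕ)
    (r a : Λ → Fin d → ℝ) (hr : ∀ i j, r i j ≠ 0 ∧ |r i j| < 1)
    (p : Λ → ℝ) (hp0 : ∀ i, 0 < p i) (hp1 : ∑ i, p i = 1)
    (μ : Measure (Fin d → ℝ)) (hμprob : IsProbabilityMeasure μ)
    (hsa : ∀ X, MeasurableSet X → μ.real X = ∑ i, p i *
      μ.real ((fun x : Fin d → ℝ => fun j => r i j * x j + a i j) ⁻¹' X)) :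
    ∃ R : ℝ, 0 ≤ R ∧ μ.real {x | R < ‖x‖} = 0 := by
  obtain ⟨ρ, hρ0, hρ1, hρ⟩ : ∃ ρ : ℝ, 0 < ρ ∧ ρ < 1 ∧ ∀ i j, |r i j| ≤ ρ := by
    rcases isEmpty_or_nonempty (Λ × Fin d) with h | h
    · exact ⟨1/2, by norm_num, by norm_num, fun i j => (h.false (i, j)).elim⟩
    · obtain ⟨q, hq⟩ := Finite.exists_max (fun q : Λ × Fin d => |r q.1 q.2|)
      exact ⟨|r q.1 q.2|, abs_pos.2 (hr _ _).1, (hr _ _).2, fun i j => hq (i, j)⟩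
  obtain ⟨A, hA0, hA⟩ : ∃ A : ℝ, 0 ≤ A ∧ ∀ i j, |a i j| ≤ A := 
    ⟨∑ q : Λ × Fin d, |a q.1 q.2|, Finset.sum_nonneg fun _ _ => abs_nonneg _, fun i j =>
      Finset.single_le_sum (f := fun q : Λ × Fin d => |a q.1 q.2|) (fun _ _ => abs_nonneg _) (Finset.mem_univ (i,j))⟩
  have hmeas : ∀ s : ℝ, MeasurableSet {x : Fin d → ℝ | s < ‖x‖} := fun s =>
    measurableSet_lt measurable_const measurable_norm
  have hstep : ∀ s : ℝ, 0 ≤ s → μ.real {x | ρ * s + A < ‖x‖} ≤ μ.real {x | s < ‖x‖} := by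
    intro s hs
    rw [hsa _ (hmeas _)]
    calc _ ≤ ∑ i, p i * μ.real {x | s < ‖x‖} := by
          refine Finset.sum_le_sum fun i _ => mul_le_mul_of_nonneg_left ?_ (hp0 i).le
          refine measureReal_mono ?_
          intro x hx
          simp only [Set.mem_preimage, Set.mem_ofPred_eq] at hx ⊢
          by_contra! h
          refine absurd hx (not_lt.2 ?_)
          rw [pi_norm_le_iff_of_nonneg (by positivity)]
          intro j
          rw [Real.norm_eq_abs]
          have h1 : |x j| ≤ s := (norm_le_pi_norm x j).trans h
          calc _ ≤ |r i j * x j| + |a i j| := abs_add_le _ _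
            _ ≤ _ := by
              rw [abs_mul]
              exact add_le_add (mul_le_mul (hρ i j) h1 (abs_nonneg _) hρ0.le) (hA i j)
      _ = _ := by rw [← Finset.sum_mul, hp1, one_mul]
  set R0 := A / (1 - ρ) with hR0
  have hR00 : 0 ≤ R0 := div_nonneg hA0 (by linarith)
  have hR0e : ρ * R0 + A = R0 := by
    have : (1 - ρ) ≠ 0 := by linarith
    rw [hR0]; field_simp; ring
  have hk : ∀ k : ℕ, μ.real {x | R0 + 1 < ‖x‖} ≤ μ.real {x | R0 + (1/ρ)^k < ‖x‖} := by
    intro k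
    induction k with
    | zero => simp
    | succ k ih =>
      refine ih.trans ?_
      have := hstep (R0 + (1/ρ)^(k+1)) (by positivity)
      have e : ρ * (R0 + (1/ρ)^(k+1)) + A = R0 + (1/ρ)^k := by
        have : ρ * (1/ρ)^(k+1) = (1/ρ)^k := by rw [pow_succ]; field_simp
        linarith
      rwa [e] at this
  refine ⟨R0 + 1, by positivity, le_antisymm ?_ measureReal_nonneg⟩
  have hmono : Monotone fun k : ℕ => (1/ρ)^k := fun i j h =>
    pow_le_pow_right₀ (by rw [le_div_iff₀ hρ0]; linarith) h
  have ht : Filter.Tendsto (fun k : ℕ => μ {x : Fin d → ℝ | R0 + (1/ρ)^k < ‖x‖}) Filter.atTop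
      (nhds (μ (⋂ k : ℕ, {x : Fin d → ℝ | R0 + (1/ρ)^k < ‖x‖}))) := by
    refine tendsto_measure_iInter_atTop (fun k => (hmeas _).nullMeasurableSet) ?_ ⟨0, measure_ne_top _ _⟩
    intro i j hij x hx
    simp only [Set.mem_ofPred_eq] at hx ⊢
    have := hmono hij
    simp only at this
    linarith
  have he : (⋂ k : ℕ, {x : Fin d → ℝ | R0 + (1/ρ)^k < ‖x‖}) = ∅ := by
    ext x
    simp only [Set.mem_iInter, Set.mem_ofPred_eq, Set.mem_empty_iff_false, iff_false, not_forall, not_lt]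
    obtain ⟨k, hk⟩ := pow_unbounded_of_one_lt ‖x‖ (show 1 < 1/ρ by rw [lt_div_iff₀ hρ0]; linarith)
    exact ⟨k, by linarith⟩
  rw [he, measure_empty] at ht
  have ht' := (ENNReal.tendsto_toReal (by simp)).comp ht
  exact ge_of_tendsto' ht' hk

lemma decomp {Λ : Type*} [Fintype Λ] [Nonempty Λ] (d : ℕ)
    (r a : Λ → Fin d → ℝ) (p : Λ → ℝ) (hp0 : ∀ i, 0 < p i) (hp1 : ∑ i, p i = 1)
    (χ : Fin d → ℝ) (t : Λ → ℝ) (ht : ∀ i, 0 < t i)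
    (hrt : ∀ i j, |r i j| = (2:ℝ) ^ (-(t i * χ j)))
    (μ : Measure (Fin d → ℝ))
    (hsa : ∀ X, MeasurableSet X → μ.real X = ∑ i, p i *
      μ.real ((fun x : Fin d → ℝ => fun j => r i j * x j + a i j) ⁻¹' X)) :
    ∃ T : ℝ, 0 ≤ T ∧ ∀ s : ℝ, 0 ≤ s → ∃ (N : ℕ) (w τ : Fin N → ℝ) (ρ b : Fin N → Fin d → ℝ),
      (∀ u, 0 < w u) ∧ ∑ u, w u = 1 ∧ (∀ u, s ≤ τ u ∧ τ u ≤ s + T) ∧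
      (∀ u j, |ρ u j| = (2:ℝ) ^ (-(τ u * χ j))) ∧
      ∀ X, MeasurableSet X → μ.real X = ∑ u, w u *
        μ.real ((fun x : Fin d → ℝ => fun j => ρ u j * x j + b u j) ⁻¹' X) := by
  obtain ⟨i0, hi0⟩ := Finite.exists_min t
  obtain ⟨i1, hi1⟩ := Finite.exists_max t
  set T := t i1
  refine ⟨T, (ht _).le, ?_⟩
  have key : ∀ N : ℕ, ∀ s : ℝ, -T ≤ s → s ≤ N * t i0 → 
    ∃ (N : ℕ) (w τ : Fin N → ℝ) (ρ b : Fin N → Fin d → ℝ),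
      (∀ u, 0 < w u) ∧ ∑ u, w u = 1 ∧ (∀ u, s ≤ τ u ∧ τ u ≤ s + T) ∧
      (∀ u j, |ρ u j| = (2:ℝ) ^ (-(τ u * χ j))) ∧
      ∀ X, MeasurableSet X → μ.real X = ∑ u, w u *
        μ.real ((fun x : Fin d → ℝ => fun j => ρ u j * x j + b u j) ⁻¹' X) := by
    have base : ∀ s : ℝ, -T ≤ s → s ≤ 0 → 
      ∃ (N : ℕ) (w τ : Fin N → ℝ) (ρ b : Fin N → Fin d → ℝ),
      (∀ u, 0 < w u) ∧ ∑ u, w u = 1 ∧ (∀ u, s ≤ τ u ∧ τ u ≤ s + T) ∧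
      (∀ u j, |ρ u j| = (2:ℝ) ^ (-(τ u * χ j))) ∧
      ∀ X, MeasurableSet X → μ.real X = ∑ u, w u *
        μ.real ((fun x : Fin d → ℝ => fun j => ρ u j * x j + b u j) ⁻¹' X) := fun s h1 h2 =>
      ⟨1, fun _ => 1, fun _ => 0, fun _ _ => 1, fun _ _ => 0, by simp, by simp,
        fun u => ⟨h2, by linarith⟩, by simp, by simp⟩
    intro N
    induction N with
    | zero => intro s h1 h2; exact base s h1 (by simpa using h2)
    | succ N ih =>
      intro s h1 h2
      by_cases h0 : s ≤ 0
      · exact base s h1 h0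
      push Not at h0
      push_cast at h2
      have := fun i => ih (s - t i) (by have := hi1 i; linarith) (by have := hi0 i; linarith)
      choose n w τ ρ b hw hw1 hτ hρ hX using this
      let e := Fintype.equivFin (Σ i, Fin (n i))
      have hsum : ∀ f : (Σ i, Fin (n i)) → ℝ, ∑ u, f (e.symm u) = ∑ i, ∑ v, f ⟨i, v⟩ := by
        intro f
        rw [Equiv.sum_comp e.symm f, Fintype.sum_sigma]
      refine ⟨_, fun u => p (e.symm u).1 * w (e.symm u).1 (e.symm u).2,
        fun u => t (e.symm u).1 + τ (e.symm u).1 (e.symm u).2,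
        fun u j => r (e.symm u).1 j * ρ (e.symm u).1 (e.symm u).2 j,
        fun u j => r (e.symm u).1 j * b (e.symm u).1 (e.symm u).2 j + a (e.symm u).1 j, ?_, ?_, ?_, ?_, ?_⟩
      · intro u; exact mul_pos (hp0 _) (hw _ _)
      · rw [hsum (fun u => p u.1 * w u.1 u.2)]
        simp only [← Finset.mul_sum, hw1, mul_one, hp1]
      · intro u
        have := hτ (e.symm u).1 (e.symm u).2
        constructor <;> linarith [this.1, this.2]
      · intro u j
        rw [abs_mul, hrt, hρ, ← Real.rpow_add (by norm_num)]
        congr 1; ring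
      · intro X hXm
        rw [hsum (fun u => p u.1 * w u.1 u.2 * μ.real ((fun x : Fin d → ℝ => fun j =>
          r u.1 j * ρ u.1 u.2 j * x j + (r u.1 j * b u.1 u.2 j + a u.1 j)) ⁻¹' X)), hsa X hXm]
        refine Finset.sum_congr rfl fun i _ => ?_
        rw [hX i _ ((by fun_prop : Measurable (fun x : Fin d → ℝ => fun j => r i j * x j + a i j)) hXm), Finset.mul_sum]
        refine Finset.sum_congr rfl fun v _ => ?_
        rw [← mul_assoc, ← Set.preimage_comp]
        congr 3
        ext x j
        simp only [Function.comp]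
        ring
  intro s hs
  obtain ⟨N, hN⟩ := exists_nat_ge (s / t i0)
  exact key N s (by linarith [ht i1]) (by rwa [div_le_iff₀ (ht i0)] at hN)

lemma good_set (d : ℕ) (μ : Measure (Fin d → ℝ)) (hμprob : IsProbabilityMeasure μ)
    (J : Finset (Fin d))
    (hdimJ : ∀ᵐ x ∂(Measure.map (fun (x : Fin d → ℝ) (j : J) => x j) μ),
      Filter.Tendsto
        (fun δ : ℝ => Real.log
            ((Measure.map (fun (x : Fin d → ℝ) (j : J) => x j) μ
              (Metric.closedBall x δ)).toReal) / Real.log δ)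
        (nhdsWithin 0 (Set.Ioi 0)) (nhds (J.card : ℝ)))
    (κ : ℝ) (hκ : κ < J.card) (D : ℝ) (hD : 0 < D) (η : ℝ) (hη : 0 < η) :
    ∃ (G : Set (Fin d → ℝ)) (M : ℕ), 1 - η ≤ μ.real G ∧ ∀ m : ℕ, M ≤ m → ∀ x ∈ G,
      μ.real {y | ∀ j : J, |y j - x j| ≤ (2:ℝ) ^ (-(m * D))} ≤ ((2:ℝ) ^ (-(m * D))) ^ κ := by
  have hmp : Measurable (fun (x : Fin d → ℝ) (j : J) => x j) := by fun_prop
  have h1 := ae_of_ae_map hmp.aemeasurable hdimJ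
  let Gs : ℕ → Set (Fin d → ℝ) := fun M => {x | ∀ m : ℕ, M ≤ m → 
      μ.real {y | ∀ j : J, |y j - x j| ≤ (2:ℝ) ^ (-(m * D))} ≤ ((2:ℝ) ^ (-(m * D))) ^ κ}
  have hmono : Monotone Gs := fun i j hij x hx m hm => hx m (hij.trans hm)
  have hun : μ (⋃ M, Gs M) = 1 := by
    rw [← measure_univ (μ := μ)]
    refine measure_congr ?_
    rw [Filter.eventuallyEq_univ]
    filter_upwards [h1] with x hx
    have hδ : Filter.Tendsto (fun m : ℕ => (2:ℝ) ^ (-(m * D))) Filter.atTop (nhdsWithin 0 (Set.Ioi 0)) := by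
      rw [tendsto_nhdsWithin_iff]
      refine ⟨?_, Filter.Eventually.of_forall fun m => Set.mem_Ioi.2 (by positivity)⟩
      have h : ∀ m : ℕ, (2:ℝ) ^ (-(m * D)) = ((2:ℝ) ^ (-D)) ^ m := by
        intro m
        rw [← Real.rpow_natCast, ← Real.rpow_mul (by norm_num)]
        congr 1; ring
      simp_rw [h]
      refine tendsto_pow_atTop_nhds_zero_of_lt_one (by positivity) ?_
      exact Real.rpow_lt_one_of_one_lt_of_neg (by norm_num) (by linarith)
    have h2 := (hx.comp hδ).eventually (lt_mem_nhds hκ)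
    obtain ⟨M, hM⟩ := Filter.eventually_atTop.1 h2
    refine Set.mem_iUnion.2 ⟨max M 1, fun m hm => ?_⟩
    have h3 := hM m (le_of_max_le_left hm)
    have hm1 : 1 ≤ m := le_of_max_le_right hm
    simp only [Function.comp] at h3
    set δ := (2:ℝ) ^ (-(m * D)) with hδd
    have hδ0 : 0 < δ := by positivity
    have hδ1 : δ < 1 := Real.rpow_lt_one_of_one_lt_of_neg (by norm_num) (by
      have : (1:ℝ) ≤ m := by exact_mod_cast hm1
      nlinarith)
    have e : (Measure.map (fun (x : Fin d → ℝ) (j : J) => x j) μ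
              (Metric.closedBall (fun j : J => x j) δ)).toReal = 
              μ.real {y | ∀ j : J, |y j - x j| ≤ δ} := by
      rw [Measure.map_apply hmp Metric.isClosed_closedBall.measurableSet, Measure.real]
      congr 2
      ext y
      simp only [Set.mem_preimage, Metric.mem_closedBall, Set.mem_ofPred_eq, dist_pi_le_iff hδ0.le, Real.dist_eq]
    rw [e] at h3
    rcases (measureReal_nonneg (μ := μ) (s := {y | ∀ j : J, |y j - x j| ≤ δ})).eq_or_lt with h0 | h0
    · rw [← h0]; positivity
    · rw [lt_div_iff_of_neg (Real.log_neg hδ0 hδ1)] at h3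
      rw [← Real.log_le_log_iff h0 (by positivity), Real.log_rpow hδ0]
      exact h3.le
  have ht := tendsto_measure_iUnion_atTop (μ := μ) hmono
  rw [hun] at ht
  have ht' := (ENNReal.tendsto_toReal (by simp)).comp ht
  have := ht'.eventually (lt_mem_nhds (show 1 - η < (1:ENNReal).toReal by simp [hη]))
  obtain ⟨M, hM⟩ := this.exists
  exact ⟨Gs M, M, hM.le, fun m hm x hx => hx m hm⟩

lemma cover_bound (d : ℕ) (μ : Measure (Fin d → ℝ)) (hμprob : IsProbabilityMeasure μ)
    (J : Finset (Fin d)) (G : Set (Fin d → ℝ)) (δ β : ℝ) (hδ : 0 < δ) (hβ : 0 ≤ β)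
    (hG : ∀ x ∈ G, μ.real {y | ∀ j : J, |y j - x j| ≤ δ} ≤ β)
    (S : J → ℝ) (hS : ∀ j, δ ≤ S j) (c : J → ℝ) (Q : Set (Fin d → ℝ))
    (hQ : ∀ y ∈ Q, ∀ j : J, c j ≤ y j ∧ y j ≤ c j + S j) :
    μ.real (Q ∩ G) ≤ (∏ j : J, (2 * S j / δ)) * β := by
  let I : Finset (J → ℕ) := Fintype.piFinset fun j : J => Finset.range (⌊S j / δ⌋₊ + 1)
  let P : (J → ℕ) → Set (Fin d → ℝ) := fun i => {y | ∀ j : J, ⌊(y j - c j) / δ⌋₊ = i j ∧ c j ≤ y j}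
  have hcov : Q ∩ G ⊆ ⋃ i ∈ I, (P i ∩ G) := by
    rintro y ⟨hy, hyG⟩
    simp only [Set.mem_iUnion]
    refine ⟨fun j => ⌊(y j - c j) / δ⌋₊, ?_, fun j => ⟨rfl, (hQ y hy j).1⟩, hyG⟩
    rw [Fintype.mem_piFinset]
    intro j
    rw [Finset.mem_range, Nat.lt_succ_iff]
    refine Nat.floor_le_floor (div_le_div_of_nonneg_right ?_ hδ.le)
    linarith [(hQ y hy j).2]
  have hP : ∀ i, μ.real (P i ∩ G) ≤ β := by
    intro i
    rcases (P i ∩ G).eq_empty_or_nonempty with h | ⟨x, hx, hxG⟩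
    · rw [h]; simpa using hβ
    · refine le_trans (measureReal_mono ?_) (hG x hxG)
      rintro y ⟨hy, _⟩ j
      have hxj := hx j
      have hyj := hy j
      have hx0 : 0 ≤ (x j - c j) / δ := div_nonneg (by linarith [hxj.2]) hδ.le
      have hy0 : 0 ≤ (y j - c j) / δ := div_nonneg (by linarith [hyj.2]) hδ.le
      have h1 := (Nat.floor_eq_iff hx0).1 hxj.1
      have h2 := (Nat.floor_eq_iff hy0).1 hyj.1
      have h3 : |(y j - c j) / δ - (x j - c j) / δ| ≤ 1 := by
        rw [abs_le]; constructor <;> linarith [h1.1, h1.2, h2.1, h2.2]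
      rw [← sub_div, abs_div, abs_of_pos hδ, div_le_one hδ] at h3
      simpa using h3
  calc μ.real (Q ∩ G) ≤ μ.real (⋃ i ∈ I, (P i ∩ G)) := measureReal_mono hcov (measure_ne_top _ _)
    _ ≤ ∑ i ∈ I, μ.real (P i ∩ G) := measureReal_biUnion_finset_le _ _
    _ ≤ ∑ i ∈ I, β := Finset.sum_le_sum fun i _ => hP i
    _ = (∏ j : J, ((⌊S j / δ⌋₊ + 1 : ℕ) : ℝ)) * β := by
      rw [Finset.sum_const, nsmul_eq_mul, Fintype.card_piFinset]; simp
    _ ≤ _ := by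
      refine mul_le_mul_of_nonneg_right (Finset.prod_le_prod (fun _ _ => by positivity) fun j _ => ?_) hβ
      have h1 : 1 ≤ S j / δ := by rw [le_div_iff₀ hδ]; linarith [hS j]
      have := Nat.floor_le (show 0 ≤ S j / δ by linarith)
      push_cast
      rw [mul_div_assoc]; linarith

lemma Ecell_eq (d : ℕ) (χ : Fin d → ℝ) (n : ℕ) (k : Fin d → ℤ) :
    Ecell d χ n k = (fun (x : Fin d → ℝ) (j : Fin d) => ⌊x j * (2:ℝ) ^ ⌊χ j * n⌋⌋) ⁻¹' {k} := by
  ext x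
  simp only [Ecell, Set.mem_ofPred_eq, Set.mem_preimage, Set.mem_singleton_iff, funext_iff]
  refine forall_congr' fun j => ?_
  have h : (0:ℝ) < (2:ℝ) ^ ⌊χ j * n⌋ := by positivity
  rw [Int.floor_eq_iff, div_le_iff₀ h, lt_div_iff₀ h]

lemma EcellJ_eq (d : ℕ) (χ : Fin d → ℝ) (J : Finset (Fin d)) (n : ℕ) (k : J → ℤ) :
    EcellJ d χ J n k = (fun (x : Fin d → ℝ) (j : J) => ⌊x j * (2:ℝ) ^ ⌊χ j * n⌋⌋) ⁻¹' {k} := by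
  ext x
  simp only [EcellJ, Set.mem_ofPred_eq, Set.mem_preimage, Set.mem_singleton_iff, funext_iff]
  refine forall_congr' fun j => ?_
  have h : (0:ℝ) < (2:ℝ) ^ ⌊χ j * n⌋ := by positivity
  rw [Int.floor_eq_iff, div_le_iff₀ h, lt_div_iff₀ h]

lemma sum_cells {Ω β : Type*} [MeasurableSpace Ω] [MeasurableSpace β] [MeasurableSingletonClass β]
    (μ : Measure Ω) (hμ : IsProbabilityMeasure μ) (f : Ω → β) (hf : Measurable f) (F : Finset β)
    (h : μ.real {x | f x ∉ F} = 0) (X : Set Ω) :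
    ∑ q ∈ F, μ.real (f ⁻¹' {q} ∩ X) = μ.real X := by
  have h1 : ∀ q ∈ F, μ.real (f ⁻¹' {q} ∩ X) = (μ.restrict X).real (f ⁻¹' {q}) := fun q _ => by
    rw [measureReal_restrict_apply (hf (measurableSet_singleton q))]
  rw [Finset.sum_congr rfl h1, sum_measureReal_preimage_singleton F
    (fun q _ => hf (measurableSet_singleton q)),
    measureReal_restrict_apply (hf F.measurableSet)]
  rw [Measure.real, Measure.real]
  congr 1
  refine measure_congr ?_
  have h2 : μ {x | f x ∉ F} = 0 := by
    rwa [measureReal_eq_zero_iff] at h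
  have h3 : ∀ᵐ x ∂μ, f x ∈ F := h2
  filter_upwards [h3] with x hx
  apply propext
  constructor
  · exact fun h => h.2
  · exact fun h => ⟨hx, h⟩

/-- finite index sets covering the support -/
noncomputable def FF {ι : Type*} [Fintype ι] [DecidableEq ι] (R : ℝ) (z : ι → ℤ) : Finset (ι → ℤ) :=
  Fintype.piFinset fun j => Finset.Icc ⌊-R * (2:ℝ) ^ z j⌋ ⌊R * (2:ℝ) ^ z j⌋

lemma mem_FF {ι : Type*} [Fintype ι] [DecidableEq ι] (R : ℝ) (z : ι → ℤ) (x : ι → ℝ)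
    (hx : ∀ j, |x j| ≤ R) : (fun j => ⌊x j * (2:ℝ) ^ z j⌋) ∈ FF R z := by
  rw [FF, Fintype.mem_piFinset]
  intro j
  have h : (0:ℝ) < (2:ℝ) ^ z j := by positivity
  have := abs_le.1 (hx j)
  rw [Finset.mem_Icc]
  exact ⟨Int.floor_le_floor (mul_le_mul_of_nonneg_right this.1 h.le),
    Int.floor_le_floor (mul_le_mul_of_nonneg_right this.2 h.le)⟩

lemma ent_core (d : ℕ) (χ : Fin d → ℝ) (hχ : ∀ j, 0 < χ j) (J : Finset (Fin d))
    (μ : Measure (Fin d → ℝ)) (hμ : IsProbabilityMeasure μ)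
    (R : ℝ) (hR0 : 0 ≤ R) (hR : μ.real {x | R < ‖x‖} = 0) (n m : ℕ)
    (N : ℕ) (w τ : Fin N → ℝ) (ρ b : Fin N → Fin d → ℝ)
    (hw : ∀ u, 0 < w u) (hw1 : ∑ u, w u = 1) (hτ : ∀ u, (n : ℝ) ≤ τ u)
    (hρ : ∀ u j, |ρ u j| = (2:ℝ) ^ (-(τ u * χ j)))
    (hX : ∀ X, MeasurableSet X → μ.real X = ∑ u, w u *
        μ.real ((fun x : Fin d → ℝ => fun j => ρ u j * x j + b u j) ⁻¹' X))
    (G : Set (Fin d → ℝ)) (L : ℝ)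
    (hG : ∀ u q, 2 * μ.real ((fun x : Fin d → ℝ => fun j => ρ u j * x j + b u j) ⁻¹'
        (EcellJ d χ J (n + m) q) ∩ G) ≤ (2:ℝ) ^ (-L)) :
    0 ≤ entJoin d χ J (n + m) n μ - entE d χ n μ ∧
    (0 ≤ L → (2 * μ.real G - 1) * L - 2 * (2 * R + 2) ^ d ≤
      entJoin d χ J (n + m) n μ - entE d χ n μ) := by
  classical
  set φ : Fin N → (Fin d → ℝ) → (Fin d → ℝ) := fun u x j => ρ u j * x j + b u j with hφ
  have hφm : ∀ u, Measurable (φ u) := fun u => by simp only [hφ]; fun_prop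
  set z : Fin d → ℤ := fun j => ⌊χ j * n⌋ with hz
  set zJ : J → ℤ := fun j => ⌊χ j * ((n + m : ℕ) : ℝ)⌋ with hzJ
  set f : (Fin d → ℝ) → (Fin d → ℤ) := fun x j => ⌊x j * (2:ℝ) ^ z j⌋ with hf
  set fJ : (Fin d → ℝ) → (J → ℤ) := fun x j => ⌊x j * (2:ℝ) ^ zJ j⌋ with hfJ
  have hfm : Measurable f := measurable_pi_iff.2 fun j =>
    Int.measurable_floor.comp (by fun_prop)
  have hfJm : Measurable fJ := measurable_pi_iff.2 fun j =>
    Int.measurable_floor.comp (by fun_prop)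
  have hE : ∀ k, Ecell d χ n k = f ⁻¹' {k} := Ecell_eq d χ n
  have hEJ : ∀ k, EcellJ d χ J (n + m) k = fJ ⁻¹' {k} := EcellJ_eq d χ J (n + m)
  set F := FF R z
  set FJ := FF R zJ
  have hfF : ∀ x, ‖x‖ ≤ R → f x ∈ F := fun x hx => mem_FF R z x fun j => (norm_le_pi_norm x j).trans hx
  have hfFJ : ∀ x, ‖x‖ ≤ R → fJ x ∈ FJ := fun x hx =>
    mem_FF R zJ (fun j : J => x j) fun j => (norm_le_pi_norm x j).trans hx
  have hmeasR : MeasurableSet {x : Fin d → ℝ | R < ‖x‖} := measurableSet_lt measurable_const measurable_norm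
  have hRu : ∀ u, μ.real (φ u ⁻¹' {x | R < ‖x‖}) = 0 := by
    intro u
    have h1 := hX _ hmeasR
    rw [hR] at h1
    have h2 := (Finset.sum_eq_zero_iff_of_nonneg (fun u _ => mul_nonneg (hw u).le measureReal_nonneg)).1 h1.symm
      u (Finset.mem_univ u)
    exact (mul_eq_zero.1 h2).resolve_left (hw u).ne'
  have null_sub : ∀ A B : Set (Fin d → ℝ), A ⊆ B → μ.real B = 0 → μ.real A = 0 := fun A B h hB =>
    le_antisymm (hB ▸ measureReal_mono h) measureReal_nonneg
  have n1 : μ.real {x | f x ∉ F} = 0 := null_sub _ _ (fun x hx => by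
    by_contra h; exact hx (hfF x (not_lt.1 h))) hR
  have n2 : μ.real {x | fJ x ∉ FJ} = 0 := null_sub _ _ (fun x hx => by
    by_contra h; exact hx (hfFJ x (not_lt.1 h))) hR
  have n3 : ∀ u, μ.real {x | f (φ u x) ∉ F} = 0 := fun u => null_sub _ _ (fun x hx => by
    by_contra h; exact hx (hfF (φ u x) (not_lt.1 h))) (hRu u)
  have n4 : ∀ u, μ.real {x | fJ (φ u x) ∉ FJ} = 0 := fun u => null_sub _ _ (fun x hx => by
    by_contra h; exact hx (hfFJ (φ u x) (not_lt.1 h))) (hRu u)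
  set a : (J → ℤ) → (Fin d → ℤ) → ℝ := fun q k => μ.real (fJ ⁻¹' {q} ∩ f ⁻¹' {k}) with ha
  set B : (Fin d → ℤ) → ℝ := fun k => μ.real (f ⁻¹' {k}) with hB
  have hBs : ∀ k, B k = ∑ q ∈ FJ, a q k := fun k => (sum_cells μ hμ fJ hfJm FJ n2 _).symm
  have ha0 : ∀ q k, 0 ≤ a q k := fun q k => measureReal_nonneg
  have hBF : ∀ k, k ∉ F → B k = 0 := fun k hk => null_sub _ _ (fun x hx => by
    rw [Set.mem_preimage, Set.mem_singleton_iff] at hx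
    simpa [hx] using hk) n1
  have haF : ∀ q k, k ∉ F → a q k = 0 := fun q k hk => null_sub _ _ Set.inter_subset_right (hBF k hk)
  have haFJ : ∀ q k, q ∉ FJ → a q k = 0 := fun q k hk => null_sub _ _ (fun x hx => by
    have := hx.1
    rw [Set.mem_preimage, Set.mem_singleton_iff] at this
    simpa [this] using hk) n2
  have e1 : entE d χ n μ = ∑ k ∈ F, -(B k * Real.logb 2 (B k)) := by
    have : ∀ k, (μ (Ecell d χ n k)).toReal = B k := fun k => by rw [hE]; rfl
    simp only [entE, this]
    exact tsum_eq_sum fun k hk => by rw [hBF k hk]; simp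
  have e2 : entJoin d χ J (n + m) n μ = ∑ k ∈ F, ∑ q ∈ FJ, -(a q k * Real.logb 2 (a q k)) := by
    have : ∀ q k, (μ (EcellJ d χ J (n + m) q ∩ Ecell d χ n k)).toReal = a q k := fun q k => by
      rw [hE, hEJ]; rfl
    simp only [entJoin, this]
    rw [tsum_eq_sum (s := FJ ×ˢ F), Finset.sum_product_right]
    rintro ⟨q, k⟩ hqk
    rw [Finset.mem_product, not_and_or] at hqk
    rcases hqk with h | h
    · simp [haFJ q k h]
    · simp [haF q k h]
  have e3 : entJoin d χ J (n + m) n μ - entE d χ n μ = 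
      ∑ k ∈ F, ∑ q ∈ FJ, a q k * (Real.logb 2 (B k) - Real.logb 2 (a q k)) := by
    rw [e1, e2, ← Finset.sum_sub_distrib]
    refine Finset.sum_congr rfl fun k _ => ?_
    simp only [mul_sub, Finset.sum_sub_distrib, Finset.sum_neg_distrib]
    rw [← Finset.sum_mul, ← hBs]; ring
  rw [e3]
  refine ⟨?_, fun hL => ?_⟩
  · refine Finset.sum_nonneg fun k _ => Finset.sum_nonneg fun q hq => ?_
    rcases (ha0 q k).eq_or_lt with h | h
    · rw [← h]; simp
    · refine mul_nonneg h.le (sub_nonneg.2 (Real.logb_le_logb_of_le (by norm_num) h ?_))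
      rw [hBs]; exact Finset.single_le_sum (f := fun q => a q k) (fun q _ => ha0 q k) hq
  let g : (J → ℤ) → (Fin d → ℤ) → ℝ := fun q k =>
    ∑ u, w u * μ.real (φ u ⁻¹' (fJ ⁻¹' {q} ∩ f ⁻¹' {k}) ∩ G)
  let W : Fin N → Finset (Fin d → ℤ) := fun u => Fintype.piFinset fun j =>
    Finset.Icc ⌊b u j * (2:ℝ) ^ z j - R⌋ ⌊b u j * (2:ℝ) ^ z j + R⌋
  let wt : (Fin d → ℤ) → ℝ := fun k => ∑ u, w u * (if k ∈ W u then 1 else 0)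
  have hWn : ∀ u k, k ∉ W u → μ.real (φ u ⁻¹' (f ⁻¹' {k})) = 0 := by
    intro u k hk
    refine null_sub _ {x | R < ‖x‖} (fun x hx => ?_) hR
    by_contra h
    have h : ‖x‖ ≤ R := not_lt.1 h
    apply hk
    rw [Set.mem_preimage, Set.mem_preimage, Set.mem_singleton_iff] at hx
    rw [← hx, Fintype.mem_piFinset]
    intro j
    have h1 : |x j| ≤ R := (norm_le_pi_norm x j).trans h
    have hp : (0:ℝ) < (2:ℝ) ^ z j := by positivity
    have h2 : |ρ u j * x j * (2:ℝ) ^ z j| ≤ R := by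
      rw [abs_mul, abs_mul, hρ, abs_of_pos hp]
      have h3 : (2:ℝ) ^ (-(τ u * χ j)) * (2:ℝ) ^ z j ≤ 1 := by
        rw [← Real.rpow_intCast, ← Real.rpow_add (by norm_num)]
        refine Real.rpow_le_one_of_one_le_of_nonpos (by norm_num) ?_
        have := Int.floor_le (χ j * n)
        have := mul_le_mul_of_nonneg_right (hτ u) (hχ j).le
        simp only [hz]
        linarith
      calc _ = ((2:ℝ) ^ (-(τ u * χ j)) * (2:ℝ) ^ z j) * |x j| := by ring
        _ ≤ 1 * R := mul_le_mul h3 h1 (abs_nonneg _) zero_le_one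
        _ = R := one_mul _
    have h4 := abs_le.1 h2
    rw [Finset.mem_Icc]
    simp only [hf, hφ]
    constructor <;> refine Int.floor_le_floor ?_ <;> rw [add_mul] <;> linarith [h4.1, h4.2]
  have hg0 : ∀ q k, 0 ≤ g q k := fun q k => Finset.sum_nonneg fun u _ => mul_nonneg (hw u).le measureReal_nonneg
  have hga : ∀ q k, g q k ≤ a q k := by
    intro q k
    simp only [ha]
    rw [hX _ ((hfJm (measurableSet_singleton q)).inter (hfm (measurableSet_singleton k)))]
    exact Finset.sum_le_sum fun u _ => mul_le_mul_of_nonneg_left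
      (measureReal_mono Set.inter_subset_left) (hw u).le
  have hwt0 : ∀ k, 0 ≤ wt k := fun k => Finset.sum_nonneg fun u _ => mul_nonneg (hw u).le (by split_ifs <;> norm_num)
  have hgw : ∀ q k, 2 * g q k ≤ (2:ℝ) ^ (-L) * wt k := by
    intro q k
    simp only [g, wt, Finset.mul_sum]
    refine Finset.sum_le_sum fun u _ => ?_
    rw [mul_left_comm, mul_left_comm _ (w u)]
    refine mul_le_mul_of_nonneg_left ?_ (hw u).le
    split_ifs with hk
    · rw [mul_one]
      refine le_trans ?_ (hG u q)
      rw [hEJ]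
      refine mul_le_mul_of_nonneg_left (measureReal_mono ?_) (by norm_num)
      exact Set.inter_subset_inter_left _ (Set.preimage_mono Set.inter_subset_left)
    · rw [null_sub _ _ (Set.inter_subset_left.trans (Set.preimage_mono Set.inter_subset_right)) (hWn u k hk)]
      simp
  have hgs : ∑ k ∈ F, ∑ q ∈ FJ, g q k = μ.real G := by
    have : ∀ k q, g q k = ∑ u, w u * μ.real ((fJ ∘ φ u) ⁻¹' {q} ∩ ((f ∘ φ u) ⁻¹' {k} ∩ G)) := by
      intro k q
      simp only [g, Set.preimage_inter, Set.preimage_comp, Set.inter_assoc]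
    simp only [this]
    have : ∀ k, ∑ q ∈ FJ, ∑ u, w u * μ.real ((fJ ∘ φ u) ⁻¹' {q} ∩ ((f ∘ φ u) ⁻¹' {k} ∩ G)) = 
        ∑ u, w u * μ.real ((f ∘ φ u) ⁻¹' {k} ∩ G) := by
      intro k
      rw [Finset.sum_comm]
      refine Finset.sum_congr rfl fun u _ => ?_
      rw [← Finset.mul_sum, sum_cells μ hμ _ (hfJm.comp (hφm u)) FJ (n4 u)]
    simp only [this]
    rw [Finset.sum_comm]
    have : ∀ u, ∑ k ∈ F, w u * μ.real ((f ∘ φ u) ⁻¹' {k} ∩ G) = w u * μ.real G := by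
      intro u
      rw [← Finset.mul_sum, sum_cells μ hμ _ (hfm.comp (hφm u)) F (n3 u)]
    simp only [this]
    rw [← Finset.sum_mul, hw1, one_mul]
  have has : ∑ k ∈ F, ∑ q ∈ FJ, a q k = 1 := by
    simp only [← hBs]
    have := sum_cells μ hμ f hfm F n1 Set.univ
    simpa [hB] using this
  have hcard : ∀ u, ((W u).card : ℝ) ≤ (2 * R + 2) ^ d := by
    intro u
    simp only [W, Fintype.card_piFinset, Int.card_Icc]
    push_cast
    calc _ ≤ ∏ j : Fin d, (2 * R + 2) := by
          refine Finset.prod_le_prod (fun _ _ => by positivity) fun j _ => ?_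
          have h1 := Int.floor_le (b u j * (2:ℝ) ^ z j + R)
          have h2 := Int.lt_floor_add_one (b u j * (2:ℝ) ^ z j - R)
          have h3 : (((⌊b u j * (2:ℝ) ^ z j + R⌋ + 1 - ⌊b u j * (2:ℝ) ^ z j - R⌋).toNat : ℤ) : ℝ) ≤ 2 * R + 2 := by
            rw [Int.toNat_eq_max]
            push_cast
            refine max_le ?_ (by positivity)
            linarith
          exact_mod_cast h3
      _ = _ := by simp
  have hwts : ∑ k ∈ F, wt k ≤ (2 * R + 2) ^ d := by
    simp only [wt]
    rw [Finset.sum_comm]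
    calc _ ≤ ∑ u, w u * (2 * R + 2) ^ d := by
          refine Finset.sum_le_sum fun u _ => ?_
          rw [← Finset.mul_sum]
          refine mul_le_mul_of_nonneg_left ?_ (hw u).le
          refine le_trans ?_ (hcard u)
          rw [Finset.sum_ite, Finset.sum_const_zero, add_zero, Finset.sum_const, nsmul_eq_mul, mul_one]
          exact_mod_cast Finset.card_le_card fun k hk => (Finset.mem_filter.1 hk).2
      _ = _ := by rw [← Finset.sum_mul, hw1, one_mul]
  have := sum_ent FJ F a g B wt L hg0 hga hwt0 hL hBs hgw
  rw [hgs, has] at this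
  linarith

lemma cell_small (d : ℕ) (χ : Fin d → ℝ) (hχ : ∀ j, 0 < χ j) (J : Finset (Fin d))
    (μ : Measure (Fin d → ℝ)) (hμ : IsProbabilityMeasure μ) (n m : ℕ) (T D κ t : ℝ) (hT : 0 ≤ T)
    (hD : ∀ j, χ j ≤ D)
    (ρ b : Fin d → ℝ) (ht : t ≤ n + T)
    (hρ : ∀ j, |ρ j| = (2:ℝ) ^ (-(t * χ j))) (G : Set (Fin d → ℝ))
    (hG : ∀ x ∈ G,
      μ.real {y | ∀ j : J, |y j - x j| ≤ (2:ℝ) ^ (-(m * D))} ≤ ((2:ℝ) ^ (-(m * D))) ^ κ)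
    (q : J → ℤ) :
    2 * μ.real ((fun x : Fin d → ℝ => fun j => ρ j * x j + b j) ⁻¹'
        (EcellJ d χ J (n + m) q) ∩ G) ≤ 
      (2:ℝ) ^ (-(m * (∑ j ∈ J, χ j) - m * D * (J.card - κ) - (∑ j ∈ J, (T * χ j + 2)) - 1)) := by
  set δ := (2:ℝ) ^ (-(m * D)) with hδd
  have hδ : 0 < δ := by positivity
  set S : J → ℝ := fun j => (2:ℝ) ^ (T * χ j + 1 - m * χ j) with hS
  have hm0 : (0:ℝ) ≤ m := Nat.cast_nonneg m
  have hSδ : ∀ j, δ ≤ S j := fun j => by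
    refine Real.rpow_le_rpow_of_exponent_le (by norm_num) ?_
    have := mul_le_mul_of_nonneg_left (hD j) hm0
    have := mul_nonneg hT (hχ j).le
    linarith
  let l : J → ℝ := fun j => ((2:ℝ) ^ ⌊χ j * ((n + m : ℕ) : ℝ)⌋)⁻¹
  let α : J → ℝ := fun j => (q j : ℝ) / (2:ℝ) ^ ⌊χ j * ((n + m : ℕ) : ℝ)⌋ - b j
  have hl0 : ∀ j, 0 < l j := fun j => by simp only [l]; positivity
  have hlS : ∀ j : J, l j / |ρ j| ≤ S j := by
    intro j
    simp only [l, S]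
    rw [hρ, ← Real.rpow_intCast, ← Real.rpow_neg (by norm_num), ← Real.rpow_sub (by norm_num)]
    refine Real.rpow_le_rpow_of_exponent_le (by norm_num) ?_
    have h1 := Int.lt_floor_add_one (χ j * ((n + m : ℕ) : ℝ))
    have h2 := mul_le_mul_of_nonneg_right ht (hχ j).le
    push_cast at h1 ⊢
    nlinarith
  let c : J → ℝ := fun j => if 0 < ρ j then α j / ρ j else (α j + l j) / ρ j
  have hcov := cover_bound d μ hμ J G δ (δ ^ κ) hδ (by positivity) hG S hSδ c
    ((fun x : Fin d → ℝ => fun j => ρ j * x j + b j) ⁻¹' (EcellJ d χ J (n + m) q)) (by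
      intro y hy j
      obtain ⟨h1, h2⟩ := hy j
      simp only at h1 h2
      rw [add_div, one_div] at h2
      have h1' : α j ≤ ρ j * y j := by simp only [α]; linarith
      have h2' : ρ j * y j ≤ α j + l j := by simp only [α, l]; linarith
      have hlj := hlS j
      have hρ0 : ρ j ≠ 0 := by
        intro h
        have := hρ j
        rw [h, abs_zero] at this
        have : (0:ℝ) < (2:ℝ) ^ (-(t * χ j)) := by positivity
        linarith
      simp only [c]
      split_ifs with hpos
      · rw [abs_of_pos hpos] at hlj
        constructor
        · rw [div_le_iff₀ hpos]; linarith
        · refine le_trans ?_ (add_le_add_right hlj _)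
          rw [← add_div, le_div_iff₀ hpos]; linarith
      · have hneg : ρ j < 0 := lt_of_le_of_ne (not_lt.1 hpos) hρ0
        rw [abs_of_neg hneg, div_neg] at hlj
        constructor
        · rw [div_le_iff_of_neg hneg]; linarith
        · refine le_trans ?_ (add_le_add_right hlj _)
          rw [← sub_eq_add_neg, ← sub_div, add_sub_cancel_right, le_div_iff_of_neg hneg]; linarith)
  refine (mul_le_mul_of_nonneg_left hcov (by norm_num)).trans (le_of_eq ?_)
  have hpr : ∏ j : J, (2 * S j / δ) = (2:ℝ) ^ (∑ j ∈ J, (T * χ j + 2 - m * χ j + m * D)) := by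
    rw [← Finset.sum_coe_sort J (fun j => T * χ j + 2 - m * χ j + m * D),
      Real.rpow_sum_of_pos (by norm_num)]
    refine Finset.prod_congr rfl fun j _ => ?_
    simp only [S, hδd]
    rw [mul_div_assoc, ← Real.rpow_sub (by norm_num)]
    nth_rewrite 1 [← Real.rpow_one 2]
    rw [← Real.rpow_add (by norm_num)]
    congr 1; ring
  rw [hpr, hδd, ← Real.rpow_mul (by norm_num), ← Real.rpow_add (by norm_num)]
  nth_rewrite 1 [← Real.rpow_one 2]
  rw [← Real.rpow_add (by norm_num)]
  congr 1
  simp only [Finset.sum_add_distrib, Finset.sum_sub_distrib, Finset.sum_const, nsmul_eq_mul, ← Finset.mul_sum]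
  ring

/-- Lemma 1.6 of the paper: for a diagonal self-affine measure `μ` with distinct Lyapunov
exponents whose linear parts lie in a 1-dimensional subgroup, if `dim π_J μ = |J|` then
for every `ε > 0`, all large `m` and all `n ≥ 1`,
`(1/m) H(μ, π_J^{-1}𝓔_{n+m} | 𝓔_n) ≥ Σ_{j∈J} χ_j − ε`. -/
theorem stmt16 {Λ : Type*} [Fintype Λ] [Nonempty Λ] (d : ℕ) (hd : 1 ≤ d)
    (r a : Λ → Fin d → ℝ) (hr : ∀ i j, r i j ≠ 0 ∧ |r i j| < 1)
    (p : Λ → ℝ) (hp0 : ∀ i, 0 < p i) (hp1 : ∑ i, p i = 1)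
    (χ : Fin d → ℝ) (hχdef : ∀ j, χ j = -∑ i, p i * Real.logb 2 |r i j|)
    (hχinc : StrictMono χ)
    (hsub : ∀ i : Λ, ∃ t : ℝ, 0 < t ∧ ∀ j, -Real.logb 2 |r i j| = t * χ j)
    (μ : Measure (Fin d → ℝ)) (hμprob : IsProbabilityMeasure μ)
    (hμsa : μ = ∑ i : Λ, ENNReal.ofReal (p i) •
      Measure.map (fun x : Fin d → ℝ => fun j => r i j * x j + a i j) μ)
    (J : Finset (Fin d))
    (hdimJ : ∀ᵐ x ∂(Measure.map (fun (x : Fin d → ℝ) (j : J) => x j) μ),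
      Filter.Tendsto
        (fun δ : ℝ => Real.log
            ((Measure.map (fun (x : Fin d → ℝ) (j : J) => x j) μ
              (Metric.closedBall x δ)).toReal) / Real.log δ)
        (nhdsWithin 0 (Set.Ioi 0)) (nhds (J.card : ℝ))) :
    ∀ ε : ℝ, 0 < ε → ∃ M : ℕ, 1 ≤ M ∧ ∀ m : ℕ, M ≤ m → ∀ n : ℕ, 1 ≤ n →
      (∑ j ∈ J, χ j) - ε ≤
        (1 / (m : ℝ)) * (entJoin d χ J (n + m) n μ - entE d χ n μ) := by
  classical
  intro ε hε
  have hsa : ∀ X, MeasurableSet X → μ.real X = ∑ i, p i *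
      μ.real ((fun x : Fin d → ℝ => fun j => r i j * x j + a i j) ⁻¹' X) := by
    intro X hX
    have h : μ X = ∑ i, ENNReal.ofReal (p i) *
        μ ((fun x : Fin d → ℝ => fun j => r i j * x j + a i j) ⁻¹' X) := by
      conv_lhs => rw [hμsa]
      rw [Measure.finsetSum_apply]
      refine Finset.sum_congr rfl fun i _ => ?_
      rw [Measure.smul_apply, Measure.map_apply (by fun_prop) hX, smul_eq_mul]
    rw [Measure.real, h, ENNReal.toReal_sum fun i _ => ENNReal.mul_ne_top ENNReal.ofReal_ne_top (measure_ne_top _ _)]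
    refine Finset.sum_congr rfl fun i _ => ?_
    rw [ENNReal.toReal_mul, ENNReal.toReal_ofReal (hp0 i).le, Measure.real]
  have hχ : ∀ j, 0 < χ j := by
    intro j
    rw [hχdef, ← Finset.sum_neg_distrib]
    refine Finset.sum_pos (fun i _ => ?_) Finset.univ_nonempty
    have := Real.logb_neg (b := 2) (by norm_num) (abs_pos.2 (hr i j).1) (hr i j).2
    nlinarith [hp0 i]
  choose t ht htχ using hsub
  have hrt : ∀ i j, |r i j| = (2:ℝ) ^ (-(t i * χ j)) := by
    intro i j
    rw [← htχ, neg_neg, Real.rpow_logb (by norm_num) (by norm_num) (abs_pos.2 (hr i j).1)]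
  obtain ⟨R, hR0, hR⟩ := supp_bound d r a hr p hp0 hp1 μ hμprob hsa
  obtain ⟨T, hT0, hT⟩ := decomp d r a p hp0 hp1 χ t ht hrt μ hsa
  set D : ℝ := 1 + ∑ j, χ j with hDdef
  have hDpos : 0 < D := by
    have : 0 ≤ ∑ j, χ j := Finset.sum_nonneg fun j _ => (hχ j).le
    linarith
  have hD : ∀ j, χ j ≤ D := fun j => by
    have := Finset.single_le_sum (f := χ) (fun j _ => (hχ j).le) (Finset.mem_univ j)
    linarith
  set X : ℝ := ∑ j ∈ J, χ j with hXdef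
  have hX0 : 0 ≤ X := Finset.sum_nonneg fun j _ => (hχ j).le
  set η : ℝ := min (1/2) (ε / (8 * (X + 1))) with hη
  have hη0 : 0 < η := lt_min (by norm_num) (by positivity)
  have hη2 : η ≤ 1/2 := min_le_left _ _
  have hηX : 2 * η * X ≤ ε / 4 := by
    have h1 : η ≤ ε / (8 * (X + 1)) := min_le_right _ _
    rw [le_div_iff₀ (by positivity)] at h1
    nlinarith
  obtain ⟨G, M0, hGm, hG⟩ := good_set d μ hμprob J hdimJ (J.card - ε / (4 * D))
    (by have : 0 < ε / (4 * D) := by positivity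
        linarith) D hDpos η hη0
  set C1 : ℝ := (∑ j ∈ J, (T * χ j + 2)) + 1 with hC1
  have hC10 : 0 ≤ C1 := by
    have : 0 ≤ ∑ j ∈ J, (T * χ j + 2) := Finset.sum_nonneg fun j _ => by
      have := mul_nonneg hT0 (hχ j).le
      linarith
    linarith
  set C2 : ℝ := 2 * (2 * R + 2) ^ d with hC2
  have hC20 : 0 ≤ C2 := by positivity
  obtain ⟨M1, hM1⟩ := exists_nat_ge (2 * (C1 + C2) / ε)
  refine ⟨max (max M0 M1) 1, le_max_right _ _, fun m hm n hn => ?_⟩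
  have hmM0 : M0 ≤ m := (le_max_left _ _).trans ((le_max_left _ _).trans hm)
  have hmM1 : M1 ≤ m := (le_max_right _ _).trans ((le_max_left _ _).trans hm)
  have hm1 : 1 ≤ m := (le_max_right _ _).trans hm
  have hm1' : (1:ℝ) ≤ m := by exact_mod_cast hm1
  have hmC : 2 * (C1 + C2) ≤ m * ε := by
    rw [← div_le_iff₀ hε]
    exact hM1.trans (by exact_mod_cast hmM1)
  obtain ⟨N, w, τ, ρ, b, hw, hw1, hτ, hρ, hXX⟩ := hT n (Nat.cast_nonneg n)
  set L : ℝ := m * X - m * D * (J.card - (J.card - ε / (4 * D))) - (∑ j ∈ J, (T * χ j + 2)) - 1 with hL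
  have hLe : L = m * X - m * (ε / 4) - C1 := by
    rw [hL, hC1]
    have : m * D * (J.card - (J.card - ε / (4 * D))) = m * (ε / 4) := by
      field_simp; ring
    rw [this]; ring
  obtain ⟨hpos, hmain⟩ := ent_core d χ hχ J μ hμprob R hR0 hR n m N w τ ρ b hw hw1
    (fun u => (hτ u).1) hρ hXX G L (fun u q => cell_small d χ hχ J μ hμprob n m T D _ (τ u) hT0 hD
      (ρ u) (b u) (hτ u).2 (hρ u) G (hG m hmM0) q)
  rw [one_div, inv_mul_eq_div, le_div_iff₀ (by linarith)]
  by_cases h0 : 0 ≤ L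
  · have h1 := hmain h0
    have h2 : (1 - 2 * η) * L ≤ (2 * μ.real G - 1) * L := mul_le_mul_of_nonneg_right (by linarith) h0
    have h3 : 2 * η * L ≤ 2 * η * (m * X) := by
      refine mul_le_mul_of_nonneg_left ?_ (by linarith)
      have : 0 ≤ m * (ε / 4) := by positivity
      linarith
    have h4 : 2 * η * (m * X) ≤ m * (ε / 4) := by
      have := mul_le_mul_of_nonneg_left hηX (by linarith : (0:ℝ) ≤ m)
      linarith
    linarith
  · push Not at h0
    linarith
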